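/- Fix θ₀ > 1 and h ∈ ℝ, set θ_n := θ₀ + h/√n, and let X ∈ {−1,1}ⁿ have the Curie–Weiss distribution P_{θ₀,CW}. Then the log-likelihood ratio log( dP_{θ_n,CW}/dP_{θ₀,CW} (X) ) = (h/(2√n))·n·X̄² − ( Z_n(θ_n,CW) − Z_n(θ₀,CW) ) converges in distribution to the Gaussian law N( −h²R(θ₀)/2, h²R(θ₀) ), where R(θ₀) := m(θ₀)²·σ²(θ₀). -/

import Mathlib

/-! The random part of the log-likelihood ratio is `h * V` with `V = √n * (x̄² - m²) / 2`, and its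
deterministic part is the cumulant generating function of `V` at `h`. Hence it suffices that the
complex moment generating function of `V` converges pointwise to `exp (R * t² / 2)`: Lévy's
continuity theorem then gives a Gaussian limit, with mean `-h² * R / 2` coming from the limit of
the cumulant generating function.

That moment generating function is a ratio of partition functions at the complex inverse temperature
`T = θ + t / √n` and at `θ`. The Hubbard–Stratonovich identity, that is a Gaussian integral in which
`x̄` appears linearly, makes the spins independent:
`(2πT)^(1/2) * cwPartition n T = ∫ (2 cosh (u / √n))ⁿ * exp (-u² / (2T)) du`.
The integrand is even, so only `u > 0` matters, and this leaves out one of the two maxima `± θ * m`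
(in the variable `u / √n`). At the remaining one the exponent is nondegenerate because `tanh` is
strictly concave on the half-line, and Laplace's method applies.
-/

open MeasureTheory ProbabilityTheory Filter

noncomputable def spin (b : Bool) : ℝ := if b then 1 else -1

noncomputable def mag (n : ℕ) (x : Fin n → Bool) : ℝ := (∑ i, spin (x i)) / n

/-- Unnormalized Curie–Weiss measure on `{-1,1}ⁿ` (encoded by `Fin n → Bool`). -/
noncomputable def cwUnnorm (n : ℕ) (θ : ℝ) : Measure (Fin n → Bool) :=
  ∑ x : Fin n → Bool,
    ENNReal.ofReal (Real.exp ((n : ℝ) * θ * mag n x ^ 2 / 2)) • Measure.dirac x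

/-- The Curie–Weiss model `P_{θ,CW}`. -/
noncomputable def cwMeasure (n : ℕ) (θ : ℝ) : Measure (Fin n → Bool) :=
  (cwUnnorm n θ Set.univ)⁻¹ • cwUnnorm n θ

/-- Log normalizing constant of the Curie–Weiss model. -/
noncomputable def Zcw (n : ℕ) (θ : ℝ) : ℝ :=
  Real.log (∑ x : Fin n → Bool, Real.exp ((n : ℝ) * θ * mag n x ^ 2 / 2))

section Calculus

lemma hasDerivAt_tanh (x : ℝ) : HasDerivAt Real.tanh (1 - Real.tanh x ^ 2) x := by
  have h_quot := (Real.hasDerivAt_sinh x).fun_div (Real.hasDerivAt_cosh x) (Real.cosh_pos x).ne'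
  simp only [← Real.tanh_eq_sinh_div_cosh] at h_quot
  refine h_quot.congr_deriv ?_
  rw [Real.tanh_eq_sinh_div_cosh]
  field_simp [(Real.cosh_pos x).ne']

lemma strictMono_tanh : StrictMono Real.tanh :=
  strictMono_of_deriv_pos fun x ↦ by
    rw [(hasDerivAt_tanh x).deriv]
    linarith [Real.tanh_sq_lt_one x]

lemma strictConcaveOn_tanh : StrictConcaveOn ℝ (Set.Ici 0) Real.tanh := by
  refine StrictAntiOn.strictConcaveOn_of_deriv (convex_Ici 0)
    (fun x _ ↦ (hasDerivAt_tanh x).continuousAt.continuousWithinAt) ?_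
  intro x hx y _ hxy
  have hx_pos : 0 < Real.tanh x := by
    rw [interior_Ici] at hx
    simpa only [Real.tanh_zero] using strictMono_tanh hx
  rw [(hasDerivAt_tanh x).deriv, (hasDerivAt_tanh y).deriv]
  nlinarith [strictMono_tanh hxy]

variable {φ ψ : ℝ → ℝ} {z₀ : ℝ}

lemma tendsto_sub_div_sub_sq {k : ℝ} (hφ : ∀ᶠ z in nhds z₀, HasDerivAt φ (ψ z) z)
    (hψ₀ : ψ z₀ = 0) (hψ : HasDerivAt ψ k z₀) :
    Tendsto (fun z ↦ (φ z - φ z₀) / (z - z₀) ^ 2) (nhdsWithin z₀ {z₀}ᶜ) (nhds (k / 2)) := by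
  have h_num : ContinuousAt (fun z ↦ φ z - φ z₀) z₀ :=
    hφ.self_of_nhds.continuousAt.sub continuousAt_const
  have h_den : ContinuousAt (fun z ↦ (z - z₀) ^ 2) z₀ := by fun_prop
  apply HasDerivAt.lhopital_zero_nhdsNE (f' := ψ) (g' := fun z ↦ 2 * (z - z₀))
  · exact (hφ.filter_mono nhdsWithin_le_nhds).mono fun z hz ↦ hz.sub_const _
  · exact Eventually.of_forall fun z ↦ by
      simpa using ((hasDerivAt_id z).sub_const z₀).fun_pow 2
  · filter_upwards [self_mem_nhdsWithin] with z hz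
    exact mul_ne_zero two_ne_zero (sub_ne_zero.2 hz)
  · simpa using h_num.tendsto.mono_left nhdsWithin_le_nhds
  · simpa using h_den.tendsto.mono_left nhdsWithin_le_nhds
  · refine ((hasDerivAt_iff_tendsto_slope.1 hψ).div_const 2).congr fun z ↦ ?_
    rw [slope_def_field, hψ₀, sub_zero, div_div, mul_comm]

lemma mul_mul_sub_le_of_concaveOn (hψ : ConcaveOn ℝ (Set.Ici 0) ψ) (hz₀ : 0 < z₀)
    (hψ_zero : 0 ≤ ψ 0) (hψ_z₀ : ψ z₀ = 0) (hψ_mid : 0 ≤ ψ (z₀ / 2)) {z : ℝ}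
    (hz : z ∈ Set.Icc 0 z₀) : 2 * ψ (z₀ / 2) / z₀ ^ 2 * (z * (z₀ - z)) ≤ ψ z := by
  have h_mid : z₀ / 2 ∈ Set.Ici (0 : ℝ) := (half_pos hz₀).le
  obtain ⟨a, rfl⟩ : ∃ a, z = a * z₀ := ⟨z / z₀, by field_simp⟩
  have ha : 0 ≤ a := nonneg_of_mul_nonneg_left hz.1 hz₀
  have ha' : a ≤ 1 := by nlinarith [hz.2]
  have h_lhs : 2 * ψ (z₀ / 2) / z₀ ^ 2 * (a * z₀ * (z₀ - a * z₀)) =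
      2 * (a * (1 - a)) * ψ (z₀ / 2) := by
    field_simp
  rw [h_lhs]
  rcases le_total a (1 / 2) with h_half | h_half
  · have h_chord := hψ.2 (Set.self_mem_Ici) h_mid (by linarith : 0 ≤ 1 - 2 * a)
      (by linarith : 0 ≤ 2 * a) (by ring)
    rw [smul_zero, zero_add, smul_eq_mul, smul_eq_mul, smul_eq_mul,
      show 2 * a * (z₀ / 2) = a * z₀ by ring] at h_chord
    nlinarith [mul_nonneg (sq_nonneg a) hψ_mid, mul_nonneg (by linarith : 0 ≤ 1 - 2 * a) hψ_zero]
  · have h_chord := hψ.2 h_mid (Set.mem_Ici.2 hz₀.le) (by linarith : 0 ≤ 2 * (1 - a))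
      (by linarith : 0 ≤ 2 * a - 1) (by ring)
    rw [hψ_z₀, smul_zero, add_zero, smul_eq_mul, smul_eq_mul, smul_eq_mul,
      show 2 * (1 - a) * (z₀ / 2) + (2 * a - 1) * z₀ = a * z₀ by ring] at h_chord
    nlinarith [mul_nonneg (sq_nonneg (1 - a)) hψ_mid]

lemma le_neg_mul_sub_of_concaveOn (hψ : ConcaveOn ℝ (Set.Ici 0) ψ) (hz₀ : 0 < z₀)
    (hψ_z₀ : ψ z₀ = 0) {z : ℝ} (hz : z₀ < z) :
    ψ z ≤ -(2 * ψ (z₀ / 2) / z₀ * (z - z₀)) := by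
  have h_slope := hψ.slope_anti_adjacent (x := z₀ / 2) (y := z₀) (z := z) (half_pos hz₀).le
    (Set.mem_Ici.2 (hz₀.trans hz).le) (by linarith) hz
  rw [hψ_z₀, div_le_iff₀ (sub_pos.2 hz)] at h_slope
  calc ψ z = ψ z - 0 := (sub_zero _).symm
    _ ≤ (0 - ψ (z₀ / 2)) / (z₀ - z₀ / 2) * (z - z₀) := h_slope
    _ = -(2 * ψ (z₀ / 2) / z₀ * (z - z₀)) := by rw [sub_half]; field_simp; ring

lemma pos_half_of_strictConcaveOn (hψ : StrictConcaveOn ℝ (Set.Ici 0) ψ) (hz₀ : 0 < z₀)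
    (hψ_zero : 0 ≤ ψ 0) (hψ_z₀ : ψ z₀ = 0) : 0 < ψ (z₀ / 2) := by
  have h_mid := hψ.2 Set.self_mem_Ici (Set.mem_Ici.2 hz₀.le) hz₀.ne (one_half_pos (α := ℝ))
    one_half_pos (add_halves 1)
  simp only [hψ_z₀, smul_eq_mul, mul_zero, add_zero, zero_add] at h_mid
  rw [one_div_mul_eq_div 2 z₀] at h_mid
  linarith

lemma le_sub_mul_sq_of_mul_mul_sub_le_deriv {a : ℝ} (ha : 0 ≤ a)
    (hφ : ∀ z ∈ Set.Icc 0 z₀, HasDerivAt φ (ψ z) z)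
    (hψ : ∀ z ∈ Set.Icc 0 z₀, a * (z * (z₀ - z)) ≤ ψ z) {z : ℝ} (hz : z ∈ Set.Icc 0 z₀) :
    φ z ≤ φ z₀ - a * z₀ / 6 * (z - z₀) ^ 2 := by
  set P : ℝ → ℝ := fun z ↦ a * (z₀ * z ^ 2 / 2 - z ^ 3 / 3) with hP
  have h_deriv (z : ℝ) (hz : z ∈ Set.Icc 0 z₀) :
      HasDerivAt (fun z ↦ φ z - P z) (ψ z - a * (z * (z₀ - z))) z :=
    ((hφ z hz).sub (((((hasDerivAt_pow 2 z).const_mul z₀).div_const 2).sub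
      ((hasDerivAt_pow 3 z).div_const 3)).const_mul a)).congr_deriv (by push_cast; ring)
  have h_mono : MonotoneOn (fun z ↦ φ z - P z) (Set.Icc 0 z₀) :=
    monotoneOn_of_hasDerivWithinAt_nonneg (convex_Icc 0 z₀)
      (fun z hz ↦ (h_deriv z hz).continuousAt.continuousWithinAt)
      (fun z hz ↦ (h_deriv z (interior_subset hz)).hasDerivWithinAt)
      (fun z hz ↦ sub_nonneg.2 (hψ z (interior_subset hz)))
  have h_le : φ z - P z ≤ φ z₀ - P z₀ := h_mono hz (Set.right_mem_Icc.2 (hz.1.trans hz.2)) hz.2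
  have h_cubic : P z₀ - P z = a * z₀ / 6 * (z - z₀) ^ 2 + a * z / 3 * (z - z₀) ^ 2 := by
    rw [hP]; ring
  have h_nonneg : 0 ≤ a * z / 3 * (z - z₀) ^ 2 := by have := hz.1; positivity
  linarith

lemma le_sub_mul_sq_of_deriv_le_neg_mul_sub {k : ℝ} (hφ : ∀ z, z₀ ≤ z → HasDerivAt φ (ψ z) z)
    (hψ : ∀ z, z₀ < z → ψ z ≤ -(k * (z - z₀))) {z : ℝ} (hz : z₀ ≤ z) :
    φ z ≤ φ z₀ - k / 2 * (z - z₀) ^ 2 := by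
  have h_deriv (z : ℝ) (hz : z₀ ≤ z) :
      HasDerivAt (fun z ↦ φ z + k / 2 * (z - z₀) ^ 2) (ψ z + k * (z - z₀)) z :=
    ((hφ z hz).add ((((hasDerivAt_id z).sub_const z₀).pow 2).const_mul _)).congr_deriv
      (by simp only [id]; push_cast; ring)
  have h_anti : AntitoneOn (fun z ↦ φ z + k / 2 * (z - z₀) ^ 2) (Set.Ici z₀) := by
    refine antitoneOn_of_hasDerivWithinAt_nonpos (convex_Ici z₀)
      (fun z hz ↦ (h_deriv z hz).continuousAt.continuousWithinAt)
      (fun z hz ↦ (h_deriv z (interior_subset hz)).hasDerivWithinAt) fun z hz ↦ ?_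
    rw [interior_Ici] at hz
    linarith [hψ z hz]
  have h_le : φ z + k / 2 * (z - z₀) ^ 2 ≤ φ z₀ + k / 2 * (z₀ - z₀) ^ 2 :=
    h_anti Set.self_mem_Ici hz hz
  linarith [show k / 2 * (z₀ - z₀) ^ 2 = 0 by ring]

theorem exists_forall_le_sub_mul_sq_of_strictConcaveOn_deriv (hz₀ : 0 < z₀)
    (hφ : ∀ z, 0 ≤ z → HasDerivAt φ (ψ z) z) (hψ : StrictConcaveOn ℝ (Set.Ici 0) ψ)
    (hψ_zero : 0 ≤ ψ 0) (hψ_z₀ : ψ z₀ = 0) :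
    ∃ c > 0, ∀ z, 0 ≤ z → φ z ≤ φ z₀ - c * (z - z₀) ^ 2 := by
  have h_mid := pos_half_of_strictConcaveOn hψ hz₀ hψ_zero hψ_z₀
  set d := ψ (z₀ / 2)
  refine ⟨d / (3 * z₀), by positivity, fun z hz ↦ ?_⟩
  rcases le_total z z₀ with hzz₀ | hzz₀
  · have h_left := le_sub_mul_sq_of_mul_mul_sub_le_deriv (by positivity : 0 ≤ 2 * d / z₀ ^ 2)
      (fun w hw ↦ hφ w hw.1)
      (fun w hw ↦ mul_mul_sub_le_of_concaveOn hψ.concaveOn hz₀ hψ_zero hψ_z₀ h_mid.le hw)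
      ⟨hz, hzz₀⟩
    have h_coeff : 2 * d / z₀ ^ 2 * z₀ / 6 = d / (3 * z₀) := by field_simp; norm_num
    rwa [h_coeff] at h_left
  · have h_right := le_sub_mul_sq_of_deriv_le_neg_mul_sub (fun w hw ↦ hφ w (hz₀.le.trans hw))
      (fun w hw ↦ le_neg_mul_sub_of_concaveOn hψ.concaveOn hz₀ hψ_z₀ hw) hzz₀
    have h_coeff : d / (3 * z₀) ≤ 2 * d / z₀ / 2 := by
      rw [div_div, div_le_div_iff₀ (by positivity) (by positivity)]
      nlinarith [mul_pos h_mid hz₀]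
    linarith [mul_le_mul_of_nonneg_right h_coeff (sq_nonneg (z - z₀))]

end Calculus

section Laplace

lemma re_inv_two_mul_pos {T : ℂ} (hT : 0 < T.re) : 0 < ((2 * T)⁻¹).re := by
  have h_re : 0 < (2 * T).re := by simpa using hT
  have h_ne : 2 * T ≠ 0 := fun h ↦ by simp [h] at h_re
  rw [Complex.inv_re]
  exact div_pos h_re (Complex.normSq_pos.2 h_ne)

lemma integral_cexp_neg_sq_div_add_mul {T : ℂ} (hT : 0 < T.re) (a : ℂ) :
    ∫ u : ℝ, Complex.exp (-(u : ℂ) ^ 2 / (2 * T) + a * u) =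
      (2 * Real.pi * T) ^ (1 / 2 : ℂ) * Complex.exp (T * a ^ 2 / 2) := by
  have hT_ne : T ≠ 0 := fun h ↦ by simp [h] at hT
  have hb : (-(2 * T)⁻¹).re < 0 := by
    simpa only [Complex.neg_re, neg_lt_zero] using re_inv_two_mul_pos hT
  calc ∫ u : ℝ, Complex.exp (-(u : ℂ) ^ 2 / (2 * T) + a * u)
      = ∫ u : ℝ, Complex.exp (-(2 * T)⁻¹ * (u : ℂ) ^ 2 + a * u + 0) := by
        congr! 3 with u
        rw [add_zero]; ring
    _ = (2 * Real.pi * T) ^ (1 / 2 : ℂ) * Complex.exp (T * a ^ 2 / 2) := by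
        rw [integral_cexp_quadratic hb]
        congr 2
        · field_simp
        · field_simp
          ring

lemma integrable_cexp_neg_sq_div_add_mul {T : ℂ} (hT : 0 < T.re) (a : ℂ) :
    Integrable fun u : ℝ ↦ Complex.exp (-(u : ℂ) ^ 2 / (2 * T) + a * u) := by
  refine (integrable_cexp_quadratic (re_inv_two_mul_pos hT) a 0).congr (ae_of_all _ fun u ↦ ?_)
  simp only [add_zero]
  congr 1; ring

variable {φ g : ℝ → ℝ} {z₀ : ℝ}

lemma tendsto_sq_mul_sub_of_tendsto_sub_div_sub_sq {k : ℝ}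
    (hφ : Tendsto (fun z ↦ (φ z - φ z₀) / (z - z₀) ^ 2) (nhdsWithin z₀ {z₀}ᶜ) (nhds k)) (v : ℝ) :
    Tendsto (fun r : ℝ ↦ r ^ 2 * (φ (z₀ + v / r) - φ z₀)) atTop (nhds (k * v ^ 2)) := by
  rcases eq_or_ne v 0 with rfl | hv
  · simp
  have h_within : Tendsto (fun r : ℝ ↦ z₀ + v / r) atTop (nhdsWithin z₀ {z₀}ᶜ) := by
    refine tendsto_nhdsWithin_iff.2 ⟨?_, ?_⟩
    · simpa using (tendsto_const_nhds.div_atTop tendsto_id).const_add z₀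
    · filter_upwards [eventually_ne_atTop 0] with r hr
      simpa [hr] using hv
  refine ((hφ.comp h_within).mul_const (v ^ 2)).congr' ?_
  filter_upwards [eventually_ne_atTop 0] with r hr
  simp only [Function.comp_apply, add_sub_cancel_left]
  field_simp

lemma tendsto_mul_sub_of_hasDerivAt {g' : ℝ} (hg : HasDerivAt g g' z₀) (v : ℝ) :
    Tendsto (fun r : ℝ ↦ r * (g (z₀ + v / r) - g z₀)) atTop (nhds (g' * v)) := by
  have h_lim := hg.hasFDerivAt.lim v (c := fun r : ℝ ↦ r) (l := atTop) tendsto_norm_atTop_atTop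
  simpa [div_eq_inv_mul, mul_comm v] using h_lim

/-- The exponent of a Laplace integral with large parameter `r`: the main part `r ^ 2 * φ` and the
lower-order perturbation `r * τ * g`, both normalised to vanish at the maximiser `z₀` of `φ`. -/
noncomputable def laplaceExponent (φ g : ℝ → ℝ) (z₀ r : ℝ) (τ : ℂ) (w : ℝ) : ℂ :=
  (r ^ 2 * (φ w - φ z₀) : ℝ) + τ * (r * (g w - g z₀) : ℝ)

lemma re_laplaceExponent_le {c A K r w : ℝ} {τ : ℂ} (hc : 0 < c) (hr : 0 < r)
    (hφ : φ w ≤ φ z₀ - c * (w - z₀) ^ 2) (hg : |g w - g z₀| ≤ A * (|w - z₀| + (w - z₀) ^ 2))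
    (hτ : ‖τ‖ ≤ K) (hAK : 4 * (K * A) ≤ c * r) :
    (laplaceExponent φ g z₀ r τ w).re ≤ (K * A) ^ 2 / c - c / 2 * (r * (w - z₀)) ^ 2 := by
  set v := r * (w - z₀) with hv
  have h_main : r ^ 2 * (φ w - φ z₀) ≤ -c * v ^ 2 := by
    rw [hv]
    nlinarith [mul_le_mul_of_nonneg_left hφ (sq_nonneg r)]
  have hK : 0 ≤ K := (norm_nonneg _).trans hτ
  have h_ratio : K * A / r ≤ c / 4 := by
    rw [div_le_iff₀ hr]
    linarith
  have h_pert : (τ * (r * (g w - g z₀) : ℝ)).re ≤ K * A * |v| + c / 4 * v ^ 2 := calc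
    (τ * (r * (g w - g z₀) : ℝ)).re ≤ ‖τ‖ * (r * |g w - g z₀|) := by
        refine (Complex.re_le_norm _).trans_eq ?_
        rw [norm_mul, Complex.norm_real, Real.norm_eq_abs, abs_mul, abs_of_pos hr]
    _ ≤ K * (r * (A * (|w - z₀| + (w - z₀) ^ 2))) := by gcongr
    _ = K * A * |v| + K * A / r * v ^ 2 := by
        rw [hv, abs_mul, abs_of_pos hr]; field_simp
    _ ≤ K * A * |v| + c / 4 * v ^ 2 := by
        gcongr
  have h_amgm : K * A * |v| ≤ (K * A) ^ 2 / c + c / 4 * v ^ 2 := by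
    have h_sq : (K * A) ^ 2 / c + c / 4 * v ^ 2 - K * A * |v| = (K * A - c / 2 * |v|) ^ 2 / c := by
      rw [← sq_abs v]; field_simp; ring
    have h_nonneg : 0 ≤ (K * A - c / 2 * |v|) ^ 2 / c := by positivity
    linarith
  rw [laplaceExponent, Complex.add_re, Complex.ofReal_re]
  linarith

lemma tendsto_laplaceExponent {k g' : ℝ} {τ : ℝ → ℂ} {τ₀ : ℂ}
    (hφ : Tendsto (fun z ↦ (φ z - φ z₀) / (z - z₀) ^ 2) (nhdsWithin z₀ {z₀}ᶜ) (nhds k))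
    (hg : HasDerivAt g g' z₀) (hτ : Tendsto τ atTop (nhds τ₀)) (v : ℝ) :
    Tendsto (fun r : ℝ ↦ laplaceExponent φ g z₀ r (τ r) (z₀ + v / r)) atTop
      (nhds (k * v ^ 2 + τ₀ * (g' * v))) := by
  have h_main := (tendsto_sq_mul_sub_of_tendsto_sub_div_sub_sq hφ v).ofReal
  have h_pert := (tendsto_mul_sub_of_hasDerivAt hg v).ofReal
  simpa [laplaceExponent] using h_main.add (hτ.mul h_pert)

lemma integral_indicator_comp_add_div (s : Set ℝ) (hs : MeasurableSet s) (F : ℝ → ℂ) (z₀ : ℝ)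
    {r : ℝ} (hr : 0 < r) :
    ∫ v, s.indicator F (z₀ + v / r) = r * ∫ w in s, F w := by
  rw [Measure.integral_comp_div (fun v ↦ s.indicator F (z₀ + v)), integral_add_left_eq_self,
    integral_indicator hs, abs_of_pos hr, Complex.real_smul]

lemma norm_indicator_cexp_laplaceExponent_le {s : Set ℝ} {c A K r : ℝ} {τ : ℂ} (hc : 0 < c)
    (hr : 0 < r) (hφ : ∀ w ∈ s, φ w ≤ φ z₀ - c * (w - z₀) ^ 2)
    (hg : ∀ w ∈ s, |g w - g z₀| ≤ A * (|w - z₀| + (w - z₀) ^ 2)) (hτ : ‖τ‖ ≤ K)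
    (hAK : 4 * (K * A) ≤ c * r) (v : ℝ) :
    ‖s.indicator (fun w ↦ Complex.exp (laplaceExponent φ g z₀ r τ w)) (z₀ + v / r)‖ ≤
      Real.exp ((K * A) ^ 2 / c) * Real.exp (-(c / 2) * v ^ 2) := by
  by_cases hv : z₀ + v / r ∈ s
  · rw [Set.indicator_of_mem hv, Complex.norm_exp, ← Real.exp_add, Real.exp_le_exp]
    have h_re := re_laplaceExponent_le hc hr (hφ _ hv) (hg _ hv) hτ hAK
    rw [add_sub_cancel_left, mul_div_cancel₀ v hr.ne'] at h_re
    linarith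
  · rw [Set.indicator_of_notMem hv, norm_zero]
    positivity

lemma tendsto_indicator_cexp_laplaceExponent {s : Set ℝ} {k g' : ℝ} {τ : ℝ → ℂ} {τ₀ : ℂ}
    (hs : s ∈ nhds z₀)
    (hφ : Tendsto (fun z ↦ (φ z - φ z₀) / (z - z₀) ^ 2) (nhdsWithin z₀ {z₀}ᶜ) (nhds k))
    (hg : HasDerivAt g g' z₀) (hτ : Tendsto τ atTop (nhds τ₀)) (v : ℝ) :
    Tendsto (fun r : ℝ ↦
      s.indicator (fun w ↦ Complex.exp (laplaceExponent φ g z₀ r (τ r) w)) (z₀ + v / r)) atTop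
      (nhds (Complex.exp (k * v ^ 2 + τ₀ * (g' * v)))) := by
  have h_lim : Tendsto (fun r : ℝ ↦ z₀ + v / r) atTop (nhds (z₀ + 0)) :=
    (tendsto_const_nhds.div_atTop tendsto_id).const_add z₀
  have h_mem : ∀ᶠ r : ℝ in atTop, z₀ + v / r ∈ s := h_lim.eventually (by rwa [add_zero])
  refine ((tendsto_laplaceExponent hφ hg hτ v).cexp).congr' ?_
  filter_upwards [h_mem] with r hr
  rw [Set.indicator_of_mem hr]

theorem tendsto_mul_setIntegral_cexp_laplaceExponent {s : Set ℝ} {c A k g' : ℝ} {τ : ℝ → ℂ}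
    {τ₀ : ℂ} (hs : MeasurableSet s) (hs_nhds : s ∈ nhds z₀) (hφ_meas : Measurable φ)
    (hg_meas : Measurable g) (hc : 0 < c) (hφ_le : ∀ w ∈ s, φ w ≤ φ z₀ - c * (w - z₀) ^ 2)
    (hφ : Tendsto (fun z ↦ (φ z - φ z₀) / (z - z₀) ^ 2) (nhdsWithin z₀ {z₀}ᶜ) (nhds k))
    (hg_le : ∀ w ∈ s, |g w - g z₀| ≤ A * (|w - z₀| + (w - z₀) ^ 2))
    (hg : HasDerivAt g g' z₀) (hτ : Tendsto τ atTop (nhds τ₀)) :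
    Tendsto (fun r : ℝ ↦ r * ∫ w in s, Complex.exp (laplaceExponent φ g z₀ r (τ r) w)) atTop
      (nhds (∫ v : ℝ, Complex.exp (k * v ^ 2 + τ₀ * (g' * v)))) := by
  set K := ‖τ₀‖ + 1
  have h_subst : Tendsto (fun r : ℝ ↦ ∫ v,
      s.indicator (fun w ↦ Complex.exp (laplaceExponent φ g z₀ r (τ r) w)) (z₀ + v / r)) atTop
      (nhds (∫ v : ℝ, Complex.exp (k * v ^ 2 + τ₀ * (g' * v)))) := by
    refine tendsto_integral_filter_of_dominated_convergence
      (fun v ↦ Real.exp ((K * A) ^ 2 / c) * Real.exp (-(c / 2) * v ^ 2)) ?_ ?_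
      ((integrable_exp_neg_mul_sq (half_pos hc)).const_mul _)
      (ae_of_all _ (tendsto_indicator_cexp_laplaceExponent hs_nhds hφ hg hτ))
    · refine Eventually.of_forall fun r ↦ Measurable.aestronglyMeasurable ?_
      refine (Measurable.indicator ?_ hs).comp (by fun_prop)
      unfold laplaceExponent
      fun_prop
    · have h_norm : ∀ᶠ r in atTop, ‖τ r‖ ≤ K := hτ.norm.eventually_le_const (lt_add_one _)
      filter_upwards [h_norm, eventually_gt_atTop 0, eventually_ge_atTop (4 * (K * A) / c)]
        with r hτr hr hrc
      exact ae_of_all _ (norm_indicator_cexp_laplaceExponent_le hc hr hφ_le hg_le hτr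
        ((div_le_iff₀' hc).1 hrc))
  refine h_subst.congr' ?_
  filter_upwards [eventually_gt_atTop 0] with r hr
  exact integral_indicator_comp_add_div s hs _ z₀ hr

end Laplace

section CurieWeiss

/-- The exponential rate `log (cosh z) - z² / (2θ)` of the Hubbard–Stratonovich integrand of the
Curie–Weiss partition function at inverse temperature `θ`, up to the constant `log 2`. -/
noncomputable def cwFreeEnergy (θ z : ℝ) : ℝ := Real.log (Real.cosh z) - z ^ 2 / (2 * θ)

/-- The curvature `-∂²/∂z² cwFreeEnergy θ z` at a critical point `z = θ * m`, `m = tanh (θ * m)`. -/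
noncomputable def cwCurvature (θ m : ℝ) : ℝ := 1 / θ - (1 - m ^ 2)

/-- The asymptotic Fisher information `R(θ) = m² σ²(θ)` of the Curie–Weiss model, as a function of
`θ` and the magnetization `m`. -/
noncomputable def cwFisherInfo (θ m : ℝ) : ℝ := m ^ 2 * ((1 - m ^ 2) / (1 - θ * (1 - m ^ 2)))

lemma hasDerivAt_cwFreeEnergy (θ z : ℝ) :
    HasDerivAt (cwFreeEnergy θ) (Real.tanh z - z / θ) z := by
  refine (((Real.hasDerivAt_cosh z).log (Real.cosh_pos z).ne').sub
    ((hasDerivAt_pow 2 z).div_const (2 * θ))).congr_deriv ?_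
  rw [Real.tanh_eq_sinh_div_cosh]
  ring

lemma hasDerivAt_tanh_sub_div (θ z : ℝ) :
    HasDerivAt (fun z ↦ Real.tanh z - z / θ) (1 - Real.tanh z ^ 2 - 1 / θ) z :=
  (hasDerivAt_tanh z).sub ((hasDerivAt_id z).div_const θ)

lemma strictConcaveOn_tanh_sub_div (θ : ℝ) :
    StrictConcaveOn ℝ (Set.Ici 0) fun z ↦ Real.tanh z - z / θ := by
  refine strictConcaveOn_tanh.sub_convexOn ⟨convex_Ici 0, fun x _ y _ a b _ _ _ ↦ le_of_eq ?_⟩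
  simp only [smul_eq_mul]
  ring

variable {θ m : ℝ}

lemma mul_one_sub_sq_lt_one (hθ : 0 < θ) (hm : 0 < m) (hfix : Real.tanh (θ * m) = m) :
    θ * (1 - m ^ 2) < 1 := by
  have hz₀ : 0 < θ * m := mul_pos hθ hm
  have h_slope := StrictConcaveOn.lt_slope_of_hasDerivAt strictConcaveOn_tanh Set.self_mem_Ici
    (Set.mem_Ici.2 hz₀.le) hz₀ (hasDerivAt_tanh (θ * m))
  rw [slope_def_field, Real.tanh_zero, hfix, sub_zero, sub_zero, lt_div_iff₀ hz₀] at h_slope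
  nlinarith

lemma cwCurvature_pos (hθ : 0 < θ) (hm : 0 < m) (hfix : Real.tanh (θ * m) = m) :
    0 < cwCurvature θ m := by
  rw [cwCurvature, sub_pos, lt_div_iff₀' hθ]
  exact mul_one_sub_sq_lt_one hθ hm hfix

lemma cwFisherInfo_nonneg (hθ : 0 < θ) (hm : 0 < m) (hfix : Real.tanh (θ * m) = m) :
    0 ≤ cwFisherInfo θ m := by
  have h_sq : m ^ 2 < 1 := hfix ▸ Real.tanh_sq_lt_one (θ * m)
  have h_lt := mul_one_sub_sq_lt_one hθ hm hfix
  exact mul_nonneg (sq_nonneg m) (div_nonneg (by linarith) (by linarith))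

lemma cwFisherInfo_eq_sq_div (hθ : 0 < θ) (hm : 0 < m) (hfix : Real.tanh (θ * m) = m) :
    cwFisherInfo θ m = m ^ 2 / (θ ^ 2 * cwCurvature θ m) - m ^ 2 / θ := by
  have h_ne : cwCurvature θ m ≠ 0 := (cwCurvature_pos hθ hm hfix).ne'
  have h_sq : 1 - m ^ 2 = 1 / θ - cwCurvature θ m := by rw [cwCurvature]; ring
  have h_den : 1 - θ * (1 / θ - cwCurvature θ m) = θ * cwCurvature θ m := by field_simp; ring
  rw [cwFisherInfo, h_sq, h_den]
  field_simp

lemma tendsto_cwFreeEnergy_sub_div_sub_sq (hθ : 0 < θ) (hfix : Real.tanh (θ * m) = m) :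
    Tendsto (fun z ↦ (cwFreeEnergy θ z - cwFreeEnergy θ (θ * m)) / (z - θ * m) ^ 2)
      (nhdsWithin (θ * m) {θ * m}ᶜ) (nhds (-cwCurvature θ m / 2)) := by
  refine tendsto_sub_div_sub_sq (Eventually.of_forall (hasDerivAt_cwFreeEnergy θ)) ?_
    ((hasDerivAt_tanh_sub_div θ (θ * m)).congr_deriv ?_)
  · rw [hfix, mul_div_cancel_left₀ m hθ.ne', sub_self]
  · rw [hfix, cwCurvature]; ring

lemma exists_forall_cwFreeEnergy_le (hθ : 0 < θ) (hm : 0 < m) (hfix : Real.tanh (θ * m) = m) :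
    ∃ c > 0, ∀ z, 0 ≤ z →
      cwFreeEnergy θ z ≤ cwFreeEnergy θ (θ * m) - c * (z - θ * m) ^ 2 := by
  refine exists_forall_le_sub_mul_sq_of_strictConcaveOn_deriv (mul_pos hθ hm)
    (fun z _ ↦ hasDerivAt_cwFreeEnergy θ z) (strictConcaveOn_tanh_sub_div θ) ?_ ?_
  · simp
  · rw [hfix, mul_div_cancel_left₀ m hθ.ne', sub_self]

lemma abs_sq_div_two_sub_le {z₀ : ℝ} (hz₀ : 0 ≤ z₀) (w : ℝ) :
    |w ^ 2 / 2 - z₀ ^ 2 / 2| ≤ (z₀ + 1 / 2) * (|w - z₀| + (w - z₀) ^ 2) := calc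
  |w ^ 2 / 2 - z₀ ^ 2 / 2| = |z₀ * (w - z₀) + (w - z₀) ^ 2 / 2| := by ring_nf
  _ ≤ |z₀ * (w - z₀)| + |(w - z₀) ^ 2 / 2| := abs_add_le _ _
  _ = z₀ * |w - z₀| + (w - z₀) ^ 2 / 2 := by
      rw [abs_mul, abs_of_nonneg hz₀, abs_of_nonneg (by positivity : 0 ≤ (w - z₀) ^ 2 / 2)]
  _ ≤ (z₀ + 1 / 2) * (|w - z₀| + (w - z₀) ^ 2) := by
      nlinarith [abs_nonneg (w - z₀), mul_nonneg hz₀ (sq_nonneg (w - z₀))]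

theorem tendsto_mul_setIntegral_cwFreeEnergy (hθ : 0 < θ) (hm : 0 < m)
    (hfix : Real.tanh (θ * m) = m) {τ : ℝ → ℂ} {τ₀ : ℂ} (hτ : Tendsto τ atTop (nhds τ₀)) :
    Tendsto (fun r : ℝ ↦ r * ∫ w in Set.Ioi 0,
        Complex.exp (laplaceExponent (cwFreeEnergy θ) (fun w ↦ w ^ 2 / 2) (θ * m) r (τ r) w))
      atTop (nhds ((2 * Real.pi * (cwCurvature θ m : ℂ)⁻¹) ^ (1 / 2 : ℂ) *
        Complex.exp ((cwCurvature θ m : ℂ)⁻¹ * (τ₀ * (θ * m : ℝ)) ^ 2 / 2))) := by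
  obtain ⟨c, hc, h_le⟩ := exists_forall_cwFreeEnergy_le hθ hm hfix
  have hz₀ : 0 < θ * m := mul_pos hθ hm
  have h_deriv : HasDerivAt (fun w : ℝ ↦ w ^ 2 / 2) (θ * m) (θ * m) :=
    ((hasDerivAt_pow 2 (θ * m)).div_const 2).congr_deriv (by push_cast; ring)
  have h_meas : Measurable (cwFreeEnergy θ) :=
    (Differentiable.continuous fun z ↦ (hasDerivAt_cwFreeEnergy θ z).differentiableAt).measurable
  have h_re : 0 < ((cwCurvature θ m : ℂ)⁻¹).re := by
    rw [← Complex.ofReal_inv, Complex.ofReal_re]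
    exact inv_pos.2 (cwCurvature_pos hθ hm hfix)
  have h_laplace := tendsto_mul_setIntegral_cexp_laplaceExponent measurableSet_Ioi
    (Ioi_mem_nhds hz₀) h_meas (by fun_prop) hc (fun w hw ↦ h_le w (Set.mem_Ioi.1 hw).le)
    (tendsto_cwFreeEnergy_sub_div_sub_sq hθ hfix)
    (fun w _ ↦ abs_sq_div_two_sub_le hz₀.le w) h_deriv hτ
  rw [← integral_cexp_neg_sq_div_add_mul h_re]
  convert h_laplace using 6 with v
  · push_cast
    field_simp
  · rw [mul_assoc]

/-- The Curie–Weiss partition function at a complex inverse temperature `T`; at real `T` it equals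
`exp (Zcw n T)`. -/
noncomputable def cwPartition (n : ℕ) (T : ℂ) : ℂ :=
  ∑ x : Fin n → Bool, Complex.exp (n * T * (mag n x : ℂ) ^ 2 / 2)

lemma sum_cexp_sum_spin_mul (n : ℕ) (w : ℂ) :
    ∑ x : Fin n → Bool, Complex.exp ((∑ i, spin (x i) : ℝ) * w) = (2 * Complex.cosh w) ^ n := calc
  ∑ x : Fin n → Bool, Complex.exp ((∑ i, spin (x i) : ℝ) * w)
      = ∑ x : Fin n → Bool, ∏ i, Complex.exp (spin (x i) * w) := by
        simp only [← Complex.exp_sum, Complex.ofReal_sum, Finset.sum_mul]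
  _ = (∑ b : Bool, Complex.exp (spin b * w)) ^ n := by rw [Fintype.sum_pow]
  _ = (2 * Complex.cosh w) ^ n := by
        rw [Complex.two_cosh, Fintype.sum_bool]
        simp [spin]

lemma sqrt_mul_mag (n : ℕ) (x : Fin n → Bool) :
    √(n : ℝ) * mag n x = (∑ i, spin (x i)) / √(n : ℝ) := by
  rw [mag, mul_div_left_comm, Real.sqrt_div_self, ← div_eq_mul_inv]

lemma two_mul_cosh_pow_mul_cexp_eq_sum (n : ℕ) (T : ℂ) (u : ℝ) :
    (2 * Complex.cosh (u / √(n : ℝ) : ℝ)) ^ n * Complex.exp (-(u : ℂ) ^ 2 / (2 * T)) =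
      ∑ x : Fin n → Bool, Complex.exp (-(u : ℂ) ^ 2 / (2 * T) + (√(n : ℝ) * mag n x : ℝ) * u) := by
  rw [← sum_cexp_sum_spin_mul, Finset.sum_mul]
  refine Finset.sum_congr rfl fun x _ ↦ ?_
  rw [sqrt_mul_mag, ← Complex.exp_add]
  push_cast
  ring_nf

lemma integrable_two_mul_cosh_pow_mul_cexp (n : ℕ) {T : ℂ} (hT : 0 < T.re) :
    Integrable fun u : ℝ ↦
      (2 * Complex.cosh (u / √(n : ℝ) : ℝ)) ^ n * Complex.exp (-(u : ℂ) ^ 2 / (2 * T)) := by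
  simp only [two_mul_cosh_pow_mul_cexp_eq_sum]
  exact integrable_finsetSum _ fun x _ ↦ integrable_cexp_neg_sq_div_add_mul hT _

theorem integral_two_mul_cosh_pow_mul_cexp (n : ℕ) {T : ℂ} (hT : 0 < T.re) :
    ∫ u : ℝ, (2 * Complex.cosh (u / √(n : ℝ) : ℝ)) ^ n * Complex.exp (-(u : ℂ) ^ 2 / (2 * T)) =
      (2 * Real.pi * T) ^ (1 / 2 : ℂ) * cwPartition n T := by
  simp only [two_mul_cosh_pow_mul_cexp_eq_sum]
  rw [integral_finsetSum _ fun x _ ↦ integrable_cexp_neg_sq_div_add_mul hT _, cwPartition,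
    Finset.mul_sum]
  refine Finset.sum_congr rfl fun x _ ↦ ?_
  rw [integral_cexp_neg_sq_div_add_mul hT, ← Complex.ofReal_pow, mul_pow,
    Real.sq_sqrt n.cast_nonneg]
  push_cast
  ring_nf

lemma integral_eq_two_mul_setIntegral_Ioi_of_even {F : ℝ → ℂ} (hF : Integrable F)
    (h_even : ∀ u, F (-u) = F u) : ∫ u, F u = 2 * ∫ u in Set.Ioi 0, F u := by
  have h_neg := integral_comp_neg_Iic 0 F
  simp only [h_even, neg_zero] at h_neg
  rw [← intervalIntegral.integral_Iic_add_Ioi (b := 0) hF.integrableOn hF.integrableOn, h_neg,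
    two_mul]

lemma setIntegral_Ioi_zero_comp_div (F : ℝ → ℂ) {r : ℝ} (hr : 0 < r) :
    ∫ u in Set.Ioi 0, F (u / r) = r * ∫ w in Set.Ioi 0, F w := by
  have h_comp := integral_comp_mul_left_Ioi F 0 (inv_pos.2 hr)
  simpa [div_eq_inv_mul] using h_comp

lemma cpow_mul_cwPartition_eq_setIntegral {n : ℕ} (hn : 0 < n) {T : ℂ} (hT : 0 < T.re) :
    (2 * Real.pi * T) ^ (1 / 2 : ℂ) * cwPartition n T =
      2 * (√(n : ℝ) * ∫ w : ℝ in Set.Ioi 0,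
        (2 * Complex.cosh w) ^ n * Complex.exp (-(n * (w : ℂ) ^ 2) / (2 * T))) := by
  have h_sqrt : 0 < √(n : ℝ) := Real.sqrt_pos.2 (Nat.cast_pos.2 hn)
  rw [← integral_two_mul_cosh_pow_mul_cexp n hT,
    integral_eq_two_mul_setIntegral_Ioi_of_even (integrable_two_mul_cosh_pow_mul_cexp n hT)
      fun u ↦ by simp [neg_div], ← setIntegral_Ioi_zero_comp_div _ h_sqrt]
  congr! 7 with u
  have h_ne : (n : ℂ) ≠ 0 := Nat.cast_ne_zero.2 hn.ne'
  rw [← Complex.ofReal_pow (u / √(n : ℝ)), div_pow, Real.sq_sqrt n.cast_nonneg]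
  push_cast
  field_simp

lemma cosh_pow_eq_cexp (n : ℕ) (w : ℝ) :
    Complex.cosh w ^ n = Complex.exp (n * Real.log (Real.cosh w) : ℝ) := by
  rw [← Complex.ofReal_cosh, ← Complex.ofReal_pow, ← Complex.ofReal_exp, Real.exp_nat_mul,
    Real.exp_log (Real.cosh_pos w)]

lemma two_mul_cosh_pow_mul_cexp_eq_laplaceExponent {n : ℕ} (hn : 0 < n) (hθ : θ ≠ 0) (m : ℝ)
    {t : ℂ} (hT : θ + t / √(n : ℝ) ≠ 0) (w : ℝ) :
    (2 * Complex.cosh w) ^ n * Complex.exp (-(n * (w : ℂ) ^ 2) / (2 * (θ + t / √(n : ℝ)))) =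
      2 ^ n * Complex.exp (n * cwFreeEnergy θ (θ * m) : ℝ) *
        Complex.exp (t * √(n : ℝ) * m ^ 2 / 2) *
        Complex.exp (-(t ^ 2 * m ^ 2 / (2 * (θ + t / √(n : ℝ))))) *
        Complex.exp (laplaceExponent (cwFreeEnergy θ) (fun w ↦ w ^ 2 / 2) (θ * m) √(n : ℝ)
          (t / (θ * (θ + t / √(n : ℝ)))) w) := by
  have h_sqrt : (√(n : ℝ) : ℂ) ≠ 0 := by simpa using hn.ne'
  have hn_sq : (n : ℂ) = (√(n : ℝ) : ℂ) ^ 2 := by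
    rw [← Complex.ofReal_pow, Real.sq_sqrt n.cast_nonneg, Complex.ofReal_natCast]
  have h_log : Real.log (Real.cosh w) = cwFreeEnergy θ w + w ^ 2 / (2 * θ) :=
    (sub_add_cancel _ _).symm
  have hθ_ne : (θ : ℂ) ≠ 0 := Complex.ofReal_ne_zero.2 hθ
  obtain ⟨T, rfl⟩ : ∃ T, t = (T - θ) * √(n : ℝ) := ⟨θ + t / √(n : ℝ), by field_simp; ring⟩
  have h_T : θ + (T - θ) * √(n : ℝ) / √(n : ℝ) = T := by field_simp; ring
  rw [h_T] at hT ⊢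
  rw [mul_pow, cosh_pow_eq_cexp, h_log, laplaceExponent]
  simp only [mul_assoc, ← Complex.exp_add]
  congr 2
  push_cast
  rw [hn_sq]
  field_simp
  ring

lemma tendsto_add_div_sqrt_natCast (a t : ℂ) :
    Tendsto (fun n : ℕ ↦ a + t / √(n : ℝ)) atTop (nhds a) := by
  have h_inv : Tendsto (fun n : ℕ ↦ (√(n : ℝ))⁻¹) atTop (nhds 0) :=
    (Real.tendsto_sqrt_atTop.comp tendsto_natCast_atTop_atTop).inv_tendsto_atTop
  simpa [div_eq_mul_inv] using (h_inv.ofReal.const_mul t).const_add a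

lemma eventually_re_add_div_sqrt_pos (hθ : 0 < θ) (t : ℂ) :
    ∀ᶠ n : ℕ in atTop, 0 < (θ + t / √(n : ℝ) : ℂ).re :=
  ((Complex.continuous_re.tendsto _).comp (tendsto_add_div_sqrt_natCast θ t)).eventually_const_lt
    (by simpa using hθ)

/-- The exponential scale `2 ^ (n + 1) * exp (n * cwFreeEnergy θ (θ * m))` of the partition
function. -/
noncomputable def cwScale (θ m : ℝ) (n : ℕ) : ℂ :=
  2 * 2 ^ n * Complex.exp (n * cwFreeEnergy θ (θ * m) : ℝ)

/-- The Laplace integral left over from the partition function at inverse temperature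
`θ + t / √n` once the exponential factors at the critical point `θ * m` are divided out. -/
noncomputable def cwLaplaceIntegral (θ m : ℝ) (t : ℂ) (n : ℕ) : ℂ :=
  √(n : ℝ) * ∫ w : ℝ in Set.Ioi 0,
    Complex.exp (laplaceExponent (cwFreeEnergy θ) (fun w ↦ w ^ 2 / 2) (θ * m) √(n : ℝ)
      (t / (θ * (θ + t / √(n : ℝ)))) w)

lemma cwScale_ne_zero (θ m : ℝ) (n : ℕ) : cwScale θ m n ≠ 0 :=
  mul_ne_zero (by simp) (Complex.exp_ne_zero _)

lemma cpow_mul_cwPartition_eq_cwLaplaceIntegral {n : ℕ} (hn : 0 < n) (hθ : θ ≠ 0) (m : ℝ) {t : ℂ}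
    (hT : 0 < (θ + t / √(n : ℝ) : ℂ).re) :
    (2 * Real.pi * (θ + t / √(n : ℝ))) ^ (1 / 2 : ℂ) * cwPartition n (θ + t / √(n : ℝ)) =
      cwScale θ m n * Complex.exp (t * √(n : ℝ) * m ^ 2 / 2) *
        Complex.exp (-(t ^ 2 * m ^ 2 / (2 * (θ + t / √(n : ℝ))))) *
        cwLaplaceIntegral θ m t n := by
  have hT_ne : (θ + t / √(n : ℝ) : ℂ) ≠ 0 := fun h ↦ by simp [h] at hT
  rw [cpow_mul_cwPartition_eq_setIntegral hn hT]
  simp only [two_mul_cosh_pow_mul_cexp_eq_laplaceExponent hn hθ m hT_ne]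
  rw [integral_const_mul, cwScale, cwLaplaceIntegral]
  ring

lemma tendsto_cwLaplaceIntegral (hθ : 0 < θ) (hm : 0 < m) (hfix : Real.tanh (θ * m) = m) (t : ℂ) :
    Tendsto (cwLaplaceIntegral θ m t) atTop
      (nhds ((2 * Real.pi * (cwCurvature θ m : ℂ)⁻¹) ^ (1 / 2 : ℂ) *
        Complex.exp ((cwCurvature θ m : ℂ)⁻¹ * (t * m / θ) ^ 2 / 2))) := by
  have hθ_ne : (θ : ℂ) ≠ 0 := Complex.ofReal_ne_zero.2 hθ.ne'
  have h_T : Tendsto (fun r : ℝ ↦ θ + t / r) atTop (nhds (θ : ℂ)) := by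
    simpa [div_eq_mul_inv] using (tendsto_inv_atTop_zero.ofReal.const_mul t).const_add (θ : ℂ)
  have h_τ : Tendsto (fun r : ℝ ↦ t / (θ * (θ + t / r))) atTop (nhds (t / (θ * θ))) :=
    tendsto_const_nhds.div (h_T.const_mul _) (mul_ne_zero hθ_ne hθ_ne)
  have h_slope : t / (θ * θ) * (θ * m : ℝ) = t * m / θ := by
    push_cast
    field_simp
  rw [← h_slope]
  exact (tendsto_mul_setIntegral_cwFreeEnergy hθ hm hfix h_τ).comp
    (Real.tendsto_sqrt_atTop.comp tendsto_natCast_atTop_atTop)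

lemma two_mul_pi_mul_mem_slitPlane {a : ℝ} (ha : 0 < a) :
    (2 * Real.pi * a : ℂ) ∈ Complex.slitPlane := by
  rw [show (2 * Real.pi * a : ℂ) = (2 * Real.pi * a : ℝ) by push_cast; rfl,
    Complex.ofReal_mem_slitPlane]
  positivity

lemma two_mul_pi_mul_cpow_ne_zero {a : ℝ} (ha : 0 < a) :
    (2 * Real.pi * a : ℂ) ^ (1 / 2 : ℂ) ≠ 0 :=
  (Complex.cpow_ne_zero_iff_of_exponent_ne_zero (by norm_num)).2
    (Complex.slitPlane_ne_zero (two_mul_pi_mul_mem_slitPlane ha))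

lemma tendsto_cpow_add_div_sqrt (hθ : 0 < θ) (t : ℂ) :
    Tendsto (fun n : ℕ ↦ (2 * Real.pi * (θ + t / √(n : ℝ))) ^ (1 / 2 : ℂ)) atTop
      (nhds ((2 * Real.pi * θ) ^ (1 / 2 : ℂ))) :=
  (continuousAt_cpow_const (two_mul_pi_mul_mem_slitPlane hθ)).tendsto.comp
    ((tendsto_add_div_sqrt_natCast θ t).const_mul _)

/-- The limit of the partition function relative to its exponential scale `cwScale`. -/
noncomputable def cwPrefactor (θ m : ℝ) : ℂ :=
  (2 * Real.pi * (cwCurvature θ m : ℂ)⁻¹) ^ (1 / 2 : ℂ) / (2 * Real.pi * θ) ^ (1 / 2 : ℂ)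

lemma cwPrefactor_ne_zero (hθ : 0 < θ) (hm : 0 < m) (hfix : Real.tanh (θ * m) = m) :
    cwPrefactor θ m ≠ 0 := by
  rw [cwPrefactor, ← Complex.ofReal_inv]
  exact div_ne_zero (two_mul_pi_mul_cpow_ne_zero (inv_pos.2 (cwCurvature_pos hθ hm hfix)))
    (two_mul_pi_mul_cpow_ne_zero hθ)

lemma cexp_neg_mul_cexp_eq_cexp_cwFisherInfo (hθ : 0 < θ) (hm : 0 < m)
    (hfix : Real.tanh (θ * m) = m) (t : ℂ) :
    Complex.exp (-(t ^ 2 * m ^ 2 / (2 * θ))) *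
        Complex.exp ((cwCurvature θ m : ℂ)⁻¹ * (t * m / θ) ^ 2 / 2) =
      Complex.exp (cwFisherInfo θ m * t ^ 2 / 2) := by
  have hθ_ne : (θ : ℂ) ≠ 0 := Complex.ofReal_ne_zero.2 hθ.ne'
  have hκ_ne : (cwCurvature θ m : ℂ) ≠ 0 :=
    Complex.ofReal_ne_zero.2 (cwCurvature_pos hθ hm hfix).ne'
  rw [← Complex.exp_add, cwFisherInfo_eq_sq_div hθ hm hfix]
  push_cast
  congr 1
  field_simp
  ring

theorem tendsto_cwPartition_div_cwScale (hθ : 0 < θ) (hm : 0 < m) (hfix : Real.tanh (θ * m) = m)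
    (t : ℂ) :
    Tendsto (fun n : ℕ ↦ cwPartition n (θ + t / √(n : ℝ)) / cwScale θ m n *
        Complex.exp (-(t * √(n : ℝ) * m ^ 2 / 2)))
      atTop (nhds (cwPrefactor θ m * Complex.exp (cwFisherInfo θ m * t ^ 2 / 2))) := by
  have hθ_ne : (2 * θ : ℂ) ≠ 0 := mul_ne_zero two_ne_zero (Complex.ofReal_ne_zero.2 hθ.ne')
  have h_cpow_ne := two_mul_pi_mul_cpow_ne_zero hθ
  have h_correction : Tendsto
      (fun n : ℕ ↦ Complex.exp (-(t ^ 2 * m ^ 2 / (2 * (θ + t / √(n : ℝ)))))) atTop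
      (nhds (Complex.exp (-(t ^ 2 * m ^ 2 / (2 * θ))))) :=
    (tendsto_const_nhds.div ((tendsto_add_div_sqrt_natCast θ t).const_mul 2) hθ_ne).neg.cexp
  have h_lim := (h_correction.mul (tendsto_cwLaplaceIntegral hθ hm hfix t)).div
    (tendsto_cpow_add_div_sqrt hθ t) h_cpow_ne
  rw [mul_left_comm, cexp_neg_mul_cexp_eq_cexp_cwFisherInfo hθ hm hfix, mul_div_right_comm] at h_lim
  refine h_lim.congr' ?_
  filter_upwards [eventually_re_add_div_sqrt_pos hθ t, eventually_gt_atTop 0,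
    (tendsto_cpow_add_div_sqrt hθ t).eventually_ne h_cpow_ne] with n hT hn h_ne
  have h_eq := cpow_mul_cwPartition_eq_cwLaplaceIntegral hn hθ.ne' m hT
  have h_exp : Complex.exp (t * √(n : ℝ) * m ^ 2 / 2) ≠ 0 := Complex.exp_ne_zero _
  rw [Pi.div_apply, div_eq_iff h_ne, Complex.exp_neg (t * √(n : ℝ) * m ^ 2 / 2),
    ← div_eq_mul_inv, div_div, div_mul_eq_mul_div,
    eq_div_iff (mul_ne_zero (cwScale_ne_zero θ m n) h_exp)]
  linear_combination -h_eq

theorem tendsto_cwPartition_ratio (hθ : 0 < θ) (hm : 0 < m) (hfix : Real.tanh (θ * m) = m)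
    (t : ℂ) :
    Tendsto (fun n : ℕ ↦ cwPartition n (θ + t / √(n : ℝ)) / cwPartition n θ *
        Complex.exp (-(t * √(n : ℝ) * m ^ 2 / 2)))
      atTop (nhds (Complex.exp (cwFisherInfo θ m * t ^ 2 / 2))) := by
  have h_prefactor := cwPrefactor_ne_zero hθ hm hfix
  have h_base : Tendsto (fun n : ℕ ↦ cwPartition n θ / cwScale θ m n) atTop
      (nhds (cwPrefactor θ m)) := by
    simpa using tendsto_cwPartition_div_cwScale hθ hm hfix 0
  have h_lim := (tendsto_cwPartition_div_cwScale hθ hm hfix t).div h_base h_prefactor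
  rw [mul_div_cancel_left₀ _ h_prefactor] at h_lim
  refine h_lim.congr fun n ↦ ?_
  have h_scale := cwScale_ne_zero θ m n
  rw [Pi.div_apply, mul_div_right_comm, div_div_div_cancel_right₀ h_scale]

end CurieWeiss

section LogLikelihoodRatio

lemma charFun_map_mul_sub_const {Ω : Type*} [MeasurableSpace Ω] {μ : Measure Ω} {V : Ω → ℝ}
    (hV : AEMeasurable V μ) (a c s : ℝ) :
    charFun (μ.map fun ω ↦ a * V ω - c) s =
      Complex.exp (-(s * c * Complex.I)) * complexMGF V μ (a * s * Complex.I) := by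
  rw [← complexMGF_mul_I (by fun_prop), complexMGF, complexMGF, ← integral_const_mul]
  congr with ω
  rw [← Complex.exp_add]
  push_cast
  ring_nf

variable {Ω : ℕ → Type*} {mΩ : ∀ n, MeasurableSpace (Ω n)} {μ : ∀ n, Measure (Ω n)}
  {V : ∀ n, Ω n → ℝ} {R : ℝ}

lemma tendsto_cgf_of_tendsto_complexMGF {h : ℝ}
    (h_lim : Tendsto (fun n ↦ complexMGF (V n) (μ n) h) atTop
      (nhds (Complex.exp (R * h ^ 2 / 2)))) :
    Tendsto (fun n ↦ cgf (V n) (μ n) h) atTop (nhds (R * h ^ 2 / 2)) := by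
  have h_mgf : Tendsto (fun n ↦ mgf (V n) (μ n) h) atTop (nhds (Real.exp (R * h ^ 2 / 2))) := by
    have h_re := (Complex.continuous_re.tendsto _).comp h_lim
    have h_exp : (Complex.exp (R * h ^ 2 / 2)).re = Real.exp (R * h ^ 2 / 2) := by
      rw [← Complex.exp_ofReal_re]; push_cast; rfl
    rw [h_exp] at h_re
    exact h_re.congr fun n ↦ re_complexMGF_ofReal h
  simpa only [cgf, Real.log_exp] using h_mgf.log (Real.exp_pos _).ne'

theorem tendstoInDistribution_mul_sub_cgf [∀ n, IsProbabilityMeasure (μ n)]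
    (hV : ∀ n, AEMeasurable (V n) (μ n)) (hR : 0 ≤ R)
    (h_lim : ∀ z : ℂ, Tendsto (fun n ↦ complexMGF (V n) (μ n) z) atTop
      (nhds (Complex.exp (R * z ^ 2 / 2)))) (h : ℝ) :
    TendstoInDistribution (fun n ω ↦ h * V n ω - cgf (V n) (μ n) h) atTop id μ
      (gaussianReal (-(h ^ 2 * R) / 2) (Real.toNNReal (h ^ 2 * R))) where
  forall_aemeasurable n := by have := hV n; fun_prop
  tendsto := by
    refine ProbabilityMeasure.tendsto_iff_tendsto_charFun.2 fun s ↦ ?_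
    have h_cgf := (tendsto_cgf_of_tendsto_complexMGF (h_lim h)).ofReal
    have h_shift := ((h_cgf.const_mul (s : ℂ)).mul_const Complex.I).neg.cexp
    have h_gaussian : Complex.exp (-(s * (R * h ^ 2 / 2 : ℝ) * Complex.I)) *
        Complex.exp (R * (h * s * Complex.I) ^ 2 / 2) =
        charFun (gaussianReal (-(h ^ 2 * R) / 2) (Real.toNNReal (h ^ 2 * R))) s := by
      rw [charFun_gaussianReal, ← Complex.exp_add, Real.coe_toNNReal _ (by positivity), mul_pow,
        Complex.I_sq]
      push_cast
      ring_nf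
    simpa only [ProbabilityMeasure.coe_mk, Measure.map_id, charFun_map_mul_sub_const (hV _),
      h_gaussian] using h_shift.mul (h_lim (h * s * Complex.I))

lemma exp_Zcw (n : ℕ) (θ : ℝ) :
    Real.exp (Zcw n θ) = ∑ x : Fin n → Bool, Real.exp (n * θ * mag n x ^ 2 / 2) :=
  Real.exp_log (Finset.sum_pos (fun _ _ ↦ Real.exp_pos _) Finset.univ_nonempty)

lemma cwPartition_ofReal (n : ℕ) (θ : ℝ) : cwPartition n θ = Real.exp (Zcw n θ) := by
  rw [exp_Zcw, cwPartition]
  push_cast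
  rfl

lemma cwUnnorm_univ (n : ℕ) (θ : ℝ) :
    cwUnnorm n θ Set.univ = ENNReal.ofReal (Real.exp (Zcw n θ)) := by
  rw [exp_Zcw, cwUnnorm, ENNReal.ofReal_sum_of_nonneg fun _ _ ↦ (Real.exp_pos _).le]
  simp

instance isProbabilityMeasure_cwMeasure (n : ℕ) (θ : ℝ) :
    IsProbabilityMeasure (cwMeasure n θ) where
  measure_univ := by
    rw [cwMeasure, Measure.smul_apply, cwUnnorm_univ, smul_eq_mul]
    exact ENNReal.inv_mul_cancel (ENNReal.ofReal_pos.2 (Real.exp_pos _)).ne' ENNReal.ofReal_ne_top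

lemma integral_cwMeasure (n : ℕ) (θ : ℝ) (g : (Fin n → Bool) → ℂ) :
    ∫ x, g x ∂cwMeasure n θ =
      (∑ x, Complex.exp (n * θ * (mag n x : ℂ) ^ 2 / 2) * g x) / cwPartition n θ := by
  rw [cwMeasure, integral_smul_measure, cwUnnorm_univ, cwUnnorm, integral_finsetSum_measure
    fun x _ ↦ Integrable.of_finite.smul_measure ENNReal.ofReal_ne_top]
  simp only [integral_smul_measure, integral_dirac, ENNReal.toReal_inv, Complex.real_smul,
    ENNReal.toReal_ofReal (Real.exp_pos _).le, cwPartition_ofReal]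
  push_cast
  rw [div_eq_inv_mul]

/-- The score of the Curie–Weiss model in the local parameter `h`, centred by replacing the mean of
`mag n x ^ 2` with its limit `m ^ 2`. -/
noncomputable def cwScore (n : ℕ) (m : ℝ) (x : Fin n → Bool) : ℝ :=
  √(n : ℝ) * (mag n x ^ 2 - m ^ 2) / 2

lemma complexMGF_cwScore (n : ℕ) (θ m : ℝ) (z : ℂ) :
    complexMGF (cwScore n m) (cwMeasure n θ) z =
      cwPartition n (θ + z / √(n : ℝ)) / cwPartition n θ *
        Complex.exp (-(z * √(n : ℝ) * m ^ 2 / 2)) := by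
  have h_div : (n : ℂ) / (√(n : ℝ) : ℂ) = √(n : ℝ) := by
    rw [← Complex.ofReal_natCast, ← Complex.ofReal_div, Real.div_sqrt]
  rw [complexMGF, integral_cwMeasure, div_mul_eq_mul_div]
  congr 1
  rw [cwPartition, Finset.sum_mul]
  refine Finset.sum_congr rfl fun x _ ↦ ?_
  rw [← Complex.exp_add, ← Complex.exp_add, cwScore, mul_add, mul_div_left_comm, h_div]
  push_cast
  ring_nf

lemma cgf_cwScore (n : ℕ) (θ m h : ℝ) :
    cgf (cwScore n m) (cwMeasure n θ) h =
      Zcw n (θ + h / √(n : ℝ)) - Zcw n θ - h * √(n : ℝ) * m ^ 2 / 2 := by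
  have h_mgf : mgf (cwScore n m) (cwMeasure n θ) h =
      Real.exp (Zcw n (θ + h / √(n : ℝ)) - Zcw n θ - h * √(n : ℝ) * m ^ 2 / 2) := by
    have h_complex := complexMGF_cwScore n θ m h
    rw [complexMGF_ofReal, ← Complex.ofReal_div, ← Complex.ofReal_add, cwPartition_ofReal,
      cwPartition_ofReal] at h_complex
    rw [sub_eq_add_neg, Real.exp_add, Real.exp_sub]
    exact_mod_cast h_complex
  rw [cgf, h_mgf, Real.log_exp]

lemma mul_cwScore_sub_cgf (n : ℕ) (θ m h : ℝ) (x : Fin n → Bool) :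
    h * cwScore n m x - cgf (cwScore n m) (cwMeasure n θ) h =
      h / (2 * √(n : ℝ)) * (n * mag n x ^ 2) - (Zcw n (θ + h / √(n : ℝ)) - Zcw n θ) := by
  have h_quad : h / (2 * √(n : ℝ)) * (n * mag n x ^ 2) = h * √(n : ℝ) * mag n x ^ 2 / 2 := calc
    h / (2 * √(n : ℝ)) * (n * mag n x ^ 2) = h * (n / √(n : ℝ)) * mag n x ^ 2 / 2 := by ring
    _ = h * √(n : ℝ) * mag n x ^ 2 / 2 := by rw [Real.div_sqrt]
  rw [cgf_cwScore, h_quad, cwScore]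
  ring

theorem tendstoInDistribution_cwLogLikelihoodRatio {θ m : ℝ} (hθ : 0 < θ) (hm : 0 < m)
    (hfix : Real.tanh (θ * m) = m) (h : ℝ) :
    TendstoInDistribution (fun (n : ℕ) (x : Fin n → Bool) ↦
        h / (2 * √(n : ℝ)) * (n * mag n x ^ 2) - (Zcw n (θ + h / √(n : ℝ)) - Zcw n θ))
      atTop id (fun n ↦ cwMeasure n θ)
      (gaussianReal (-(h ^ 2 * cwFisherInfo θ m) / 2)
        (Real.toNNReal (h ^ 2 * cwFisherInfo θ m))) := by
  simp only [← mul_cwScore_sub_cgf _ _ m]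
  refine tendstoInDistribution_mul_sub_cgf (fun n ↦ (measurable_of_finite _).aemeasurable)
    (cwFisherInfo_nonneg hθ hm hfix) (fun z ↦ ?_) h
  simp only [complexMGF_cwScore]
  exact tendsto_cwPartition_ratio hθ hm hfix z

end LogLikelihoodRatio

theorem stmt17 (θ₀ h : ℝ) (hθ : 1 < θ₀) (m : ℝ → ℝ)
    (hm : ∀ θ : ℝ, 1 < θ → 0 < m θ ∧ Real.tanh (θ * m θ) = m θ) :
    ∀ f : BoundedContinuousFunction ℝ ℝ,
      Tendsto (fun n : ℕ =>
          ∫ x, f (h / (2 * Real.sqrt (n : ℝ)) * ((n : ℝ) * mag n x ^ 2) -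
              (Zcw n (θ₀ + h / Real.sqrt (n : ℝ)) - Zcw n θ₀)) ∂ cwMeasure n θ₀)
        atTop
        (nhds (∫ y, f y ∂ gaussianReal
          (-(h ^ 2 * (m θ₀ ^ 2 * ((1 - m θ₀ ^ 2) / (1 - θ₀ * (1 - m θ₀ ^ 2))))) / 2)
          (Real.toNNReal
            (h ^ 2 * (m θ₀ ^ 2 * ((1 - m θ₀ ^ 2) / (1 - θ₀ * (1 - m θ₀ ^ 2)))))))) := by
  intro f
  obtain ⟨hm_pos, hfix⟩ := hm θ₀ hθ
  have h_dist := tendstoInDistribution_cwLogLikelihoodRatio (by positivity) hm_pos hfix h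
  have h_int := ProbabilityMeasure.tendsto_iff_forall_integral_tendsto.1 h_dist.tendsto f
  simp only [ProbabilityMeasure.coe_mk, Measure.map_id] at h_int
  refine h_int.congr fun n ↦ ?_
  exact integral_map (h_dist.forall_aemeasurable n) f.continuous.aestronglyMeasurable
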